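/- Let 𝐫 = ((r_1,s_1),…,(r_v,s_v)) and 𝐭 = ((t_1,u_1),…,(t_w,u_w)) be vectors of pairs of integers with all s_i positive, all u_j ≠ 0, all t_j/u_j ∉ ℤ_{≤0} and all r_i/s_i ∉ ℤ_{≤0}. Then the following are equivalent: (i) the sequence (Q_{𝐫,𝐭}(q; n))_{n≥0} is q-integral; (ii) for every b ∈ {1, …, d_{𝐫,𝐭}} and all x ∈ ℝ, Ξ_{𝐫,𝐭}(b, x) ≥ 0. -/

import Mathlib

open Polynomial
open scoped Classical

noncomputable section

/-- The generalized Dwork map `D_b(α)`: the unique rational whose reduced denominator is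
coprime to `b` and such that `b·D_b(α) − α ∈ {0, 1, …, b−1}`. -/
def dwork (b : ℕ) (α : ℚ) : ℚ :=
  if h : ∃ θ : ℚ, Nat.Coprime θ.den b ∧ ∃ k : ℤ, 0 ≤ k ∧ k < (b : ℤ) ∧ (b : ℚ) * θ - α = (k : ℚ)
  then h.choose else 0

/-- `α ∈ ℤ_{≤0}`. -/
def IsNonPosInt (α : ℚ) : Prop := ∃ m : ℤ, m ≤ 0 ∧ α = (m : ℚ)

/-- `α ∈ ℤ_{>0}`. -/
def IsPosInt (α : ℚ) : Prop := ∃ m : ℤ, 0 < m ∧ α = (m : ℚ)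

/-- `𝔫_α`. -/
def frakn (α : ℚ) : ℤ := if 0 ≤ α then α.num else |α.num| + 1

/-- `⟨x⟩`: the fractional part of `x` if `x ∉ ℤ`, and `1` if `x ∈ ℤ`. -/
def cangle (x : ℝ) : ℝ := if ∃ m : ℤ, x = (m : ℝ) then 1 else Int.fract x

/-- Christol order `x ⪯ y`. -/
def cle (x y : ℝ) : Prop := cangle x < cangle y ∨ (cangle x = cangle y ∧ y ≤ x)

/-- The step function `δ_b(r, s, ·)`. -/
def qdelta (b : ℕ) (r s : ℤ) (x : ℝ) : ℤ :=
  if Int.gcd (s / (Nat.gcd (Int.gcd r s) b : ℤ)) (((b / Nat.gcd (Int.gcd r s) b : ℕ)) : ℤ) = 1 then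
    ⌊(Nat.gcd (Int.gcd r s) b : ℝ) * x
        - ((dwork (b / Nat.gcd (Int.gcd r s) b) ((r : ℚ) / (s : ℚ)) : ℚ) : ℝ)
        - ((⌊1 - (r : ℚ) / (s : ℚ)⌋ : ℤ) : ℝ) / ((b / Nat.gcd (Int.gcd r s) b : ℕ) : ℝ)⌋ + 1
  else 0

/-- The Landau-type step function `Δ_b^{𝐫,𝐭}`. -/
def qDeltaFn {v w : ℕ} (b : ℕ) (rr : Fin v → ℤ × ℤ) (tt : Fin w → ℤ × ℤ) (x : ℝ) : ℤ :=
  (∑ i, qdelta b (rr i).1 (rr i).2 x) - (∑ j, qdelta b (tt j).1 (tt j).2 x)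

/-- The q-Pochhammer symbol `(q^r; q^s)_n` for `n ∈ ℕ`, inside `ℚ(q)`. -/
def qPoch (r s : ℤ) (n : ℕ) : RatFunc ℚ :=
  ∏ i ∈ Finset.range n, (1 - RatFunc.X ^ (r + s * (i : ℤ)))

/-- The q-Pochhammer symbol `(q^r; q^s)_n` for `n ∈ ℤ`. -/
def qPochZ (r s : ℤ) (n : ℤ) : RatFunc ℚ :=
  if 0 ≤ n then qPoch r s n.toNat else (qPoch (r - s) (-s) (-n).toNat)⁻¹

/-- Multiplicity of `p` in `g`: the largest `k` with `p^k ∣ g`. -/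
def polyMult (p g : Polynomial ℚ) : ℕ := sSup {k : ℕ | p ^ k ∣ g}

/-- The valuation `v_{φ_b}` on `ℚ(q)` attached to the `b`-th cyclotomic polynomial. -/
def cycVal (b : ℕ) (f : RatFunc ℚ) : ℤ :=
  (polyMult (cyclotomic b ℚ) f.num : ℤ) - (polyMult (cyclotomic b ℚ) f.denom : ℤ)

/-- The image of an integer polynomial in `ℚ(q)`. -/
def polyZ (g : Polynomial ℤ) : RatFunc ℚ :=
  algebraMap (Polynomial ℚ) (RatFunc ℚ) (g.map (Int.castRingHom ℚ))

/-- `f ∈ ℤ[q⁻¹, q]`. -/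
def IsIntLaurent (f : RatFunc ℚ) : Prop :=
  ∃ (m : ℕ) (g : Polynomial ℤ), f * RatFunc.X ^ m = polyZ g

/-- `f ∈ ℤ[q]`. -/
def IsIntPoly (f : RatFunc ℚ) : Prop := ∃ g : Polynomial ℤ, f = polyZ g

/-- The ratio attached to a pair of integers. -/
def ratOf (p : ℤ × ℤ) : ℚ := (p.1 : ℚ) / (p.2 : ℚ)

/-- The q-hypergeometric term `Q_{𝐫,𝐭}(q; n)`, `n ∈ ℕ`. -/
def qHyp {v w : ℕ} (rr : Fin v → ℤ × ℤ) (tt : Fin w → ℤ × ℤ) (n : ℕ) : RatFunc ℚ :=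
  (∏ i, qPoch (rr i).1 (rr i).2 n) / (∏ j, qPoch (tt j).1 (tt j).2 n)

/-- The q-hypergeometric term `Q_{𝐫,𝐭}(q; n)`, `n ∈ ℤ`. -/
def qHypZ {v w : ℕ} (rr : Fin v → ℤ × ℤ) (tt : Fin w → ℤ × ℤ) (n : ℤ) : RatFunc ℚ :=
  (∏ i, qPochZ (rr i).1 (rr i).2 n) / (∏ j, qPochZ (tt j).1 (tt j).2 n)

/-- `c := gcd(r, s, b)`. -/
def cOf (p : ℤ × ℤ) (b : ℕ) : ℕ := Nat.gcd (Int.gcd p.1 p.2) b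

/-- Membership in `V_b` (resp. `W_b`): `gcd(s, b) = gcd(r, s, b)`. -/
def inV (p : ℤ × ℤ) (b : ℕ) : Prop := Nat.gcd p.2.natAbs b = cOf p b

/-- `d_{𝐫,𝐭}`: the lcm of all the `s_i` and `u_j`. -/
def dRT {v w : ℕ} (rr : Fin v → ℤ × ℤ) (tt : Fin w → ℤ × ℤ) : ℕ :=
  Nat.lcm (Finset.univ.lcm fun i => ((rr i).2).natAbs)
    (Finset.univ.lcm fun j => ((tt j).2).natAbs)

/-- `b̃`: the greatest divisor of `b` coprime to `d`. -/
def btilde (d b : ℕ) : ℕ := Nat.findGreatest (fun k => k ∣ b ∧ Nat.Coprime k d) b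

/-- The unique `a ∈ {1,…,d}` with `a·b̃ ≡ 1 (mod d)`. -/
def aOf (d b : ℕ) : ℕ :=
  if h : ∃ a, 1 ≤ a ∧ a ≤ d ∧ (a * btilde d b) % d = 1 % d then h.choose else 1

/-- The representative of `b` modulo `d` lying in `{1,…,d}`. -/
def repMod (d b : ℕ) : ℕ := if b % d = 0 then d else b % d

/-- The jump abscissa `(⟨e·α⟩ + k)/c − ⌊1 − a·α⌋`. -/
def jumpPt (p : ℤ × ℤ) (b : ℕ) (a ei : ℤ) (k : ℕ) : ℝ :=
  (cangle (((ei : ℚ) * ratOf p : ℚ) : ℝ) + (k : ℝ)) / (cOf p b : ℝ)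
    - ((⌊1 - (a : ℚ) * ratOf p⌋ : ℤ) : ℝ)

/-- Number of pairs `(i,k)` with jump abscissa `⪯ x` coming from one pair `p`. -/
def XiCount (p : ℤ × ℤ) (b : ℕ) (a ei : ℤ) (x : ℝ) : ℕ :=
  if inV p b then ((Finset.range (cOf p b)).filter fun k => cle (jumpPt p b a ei k) x).card else 0

/-- The generalized Christol step function `Ξ_{𝐫,𝐭}(b, ·)`, relative to choices `e`, `f`. -/
def Xi {v w : ℕ} (rr : Fin v → ℤ × ℤ) (tt : Fin w → ℤ × ℤ) (b : ℕ)
    (e : Fin v → ℤ) (f : Fin w → ℤ) (x : ℝ) : ℤ :=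
  (∑ i, (XiCount (rr i) b ((aOf (dRT rr tt) b : ℕ) : ℤ) (e i) x : ℤ))
    - (∑ j, (XiCount (tt j) b ((aOf (dRT rr tt) b : ℕ) : ℤ) (f j) x : ℤ))

/-- `ei` is an admissible choice for the pair `p` and `b`: positive with `b·ei ≡ c (mod s)`. -/
def goodChoice (p : ℤ × ℤ) (b : ℕ) (ei : ℤ) : Prop :=
  inV p b → 0 < ei ∧ p.2 ∣ ((b : ℤ) * ei - (cOf p b : ℤ))

end

lemma cangle_pos (x : ℝ) : 0 < cangle x := by
  unfold cangle
  split_ifs with h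
  · exact one_pos
  · exact Int.fract_pos.2 fun h' => h ⟨_, h'⟩

lemma cangle_le_one (x : ℝ) : cangle x ≤ 1 := by
  unfold cangle
  split_ifs with h
  · exact le_rfl
  · exact (Int.fract_lt_one x).le

lemma exists_cangle_eq_sub (x : ℝ) : ∃ j : ℤ, cangle x = x - j := by
  unfold cangle
  split_ifs with h
  · obtain ⟨m, rfl⟩ := h
    exact ⟨m - 1, by push_cast; ring⟩
  · exact ⟨⌊x⌋, rfl⟩

lemma cangle_sub_int {y : ℝ} (h0 : 0 < y) (h1 : y ≤ 1) (j : ℤ) : cangle (y - j) = y := by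
  obtain ⟨k, hk⟩ := exists_cangle_eq_sub (y - j)
  have hp := cangle_pos (y - j)
  have hl := cangle_le_one (y - j)
  rw [hk] at hp hl ⊢
  have h2 : -1 < j + k := by
    have : (-1 : ℝ) < ((j + k : ℤ) : ℝ) := by push_cast; nlinarith
    exact_mod_cast this
  have h3 : j + k < 1 := by
    have : ((j + k : ℤ) : ℝ) < 1 := by push_cast; nlinarith
    exact_mod_cast this
  have h4 : ((j + k : ℤ) : ℝ) = 0 := by
    have : j + k = 0 := by omega
    simp [this]
  push_cast at h4
  linarith

/-- The Christol order as a pullback of a linear order. -/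
lemma cle_iff_toLex_le (x y : ℝ) :
    cle x y ↔ toLex (cangle x, OrderDual.toDual x) ≤ toLex (cangle y, OrderDual.toDual y) := by
  rw [Prod.Lex.toLex_le_toLex]
  rfl

/-- Nonnegativity of weighted partial sums along a linear order only has to be tested at the
jumps. -/
lemma sum_filter_le_nonneg {J L : Type*} [LinearOrder L] (S : Finset J) (f : J → L) (σ : J → ℤ)
    (h : ∀ a ∈ S, 0 ≤ ∑ a' ∈ S with f a' ≤ f a, σ a') (x : L) :
    0 ≤ ∑ a' ∈ S with f a' ≤ x, σ a' := by
  rcases (S.filter fun a' => f a' ≤ x).eq_empty_or_nonempty with h0 | h0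
  · simp [h0]
  · obtain ⟨a, ha, hmax⟩ := Finset.exists_max_image _ f h0
    rw [Finset.mem_filter] at ha
    convert h a ha.1 using 2
    ext a'
    simp only [Finset.mem_filter, and_congr_right_iff]
    exact fun ha' => ⟨fun hx => hmax a' (Finset.mem_filter.2 ⟨ha', hx⟩), fun hx => hx.trans ha.2⟩

/-- The number of `k < n` with `b ∣ r + s k`, for the pair `p = (r, s)`. -/
def divCount (p : ℤ × ℤ) (b n : ℕ) : ℕ :=
  ((Finset.range n).filter fun k : ℕ => (b : ℤ) ∣ p.1 + p.2 * k).card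

lemma divCount_add (p : ℤ × ℤ) (b n : ℕ) :
    divCount p b (n + b) = divCount p b n + divCount p b b := by
  have hper : Function.Periodic (fun k : ℕ => (b : ℤ) ∣ p.1 + p.2 * k) b := by
    intro k
    have : p.1 + p.2 * ((k + b : ℕ) : ℤ) = p.1 + p.2 * k + p.2 * b := by push_cast; ring
    simp only [this, eq_iff_iff]
    exact dvd_add_left (Dvd.intro_left _ rfl)
  have h1 := Nat.filter_Ico_card_eq_of_periodic n b _ hper
  rw [Nat.count_eq_card_filter_range] at h1
  unfold divCount
  rw [← h1, ← Finset.card_union_of_disjoint, ← Finset.filter_union]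
  · congr 2
    ext k
    simp only [Finset.mem_range, Finset.mem_union, Finset.mem_Ico]
    omega
  · rw [Finset.disjoint_left]
    intro k hk hk'
    simp only [Finset.mem_filter, Finset.mem_range, Finset.mem_Ico] at hk hk'
    omega

lemma divCount_le (p : ℤ × ℤ) (b n : ℕ) : divCount p b n ≤ n :=
  (Finset.card_filter_le _ _).trans (Finset.card_range n).le

lemma inV_iff_gcd_dvd (p : ℤ × ℤ) (b : ℕ) : inV p b ↔ (Int.gcd p.2 b : ℤ) ∣ p.1 := by
  have h : Nat.gcd p.2.natAbs b = Int.gcd p.2 b := by simp [Int.gcd]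
  have h' : cOf p b = Nat.gcd p.1.natAbs (Int.gcd p.2 b) := by
    rw [← h, cOf, Int.gcd, Nat.gcd_assoc]
  rw [inV, h, h', eq_comm, Nat.gcd_eq_right_iff_dvd, Int.natCast_dvd]

lemma divCount_eq_zero {p : ℤ × ℤ} {b : ℕ} (h : ¬ inV p b) (n : ℕ) : divCount p b n = 0 := by
  unfold divCount
  rw [Finset.card_eq_zero, Finset.filter_eq_empty_iff]
  intro k _ hk
  apply h
  rw [inV_iff_gcd_dvd]
  have h1 : (Int.gcd p.2 b : ℤ) ∣ p.1 + p.2 * k := (Int.gcd_dvd_right _ _).trans hk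
  exact (dvd_add_left ((Int.gcd_dvd_left _ _).mul_right _)).1 h1

lemma inV_congr {p : ℤ × ℤ} {b b₀ : ℕ} (h : p.2 ∣ (b : ℤ) - b₀) : inV p b ↔ inV p b₀ := by
  rw [inV_iff_gcd_dvd, inV_iff_gcd_dvd]
  obtain ⟨t, ht⟩ := h
  have : (b : ℤ) = b₀ + p.2 * t := by linarith
  rw [this, Int.gcd_add_mul_left_right]

lemma exists_goodChoice (p : ℤ × ℤ) (hs : p.2 ≠ 0) (b : ℕ) : ∃ e : ℤ, goodChoice p b e := by
  by_cases hV : inV p b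
  · have hc : (cOf p b : ℤ) = Int.gcd p.2 b := by rw [← show _ = cOf p b from hV]; simp [Int.gcd]
    have hb := Int.gcd_eq_gcd_ab p.2 b
    refine ⟨Int.gcdB p.2 b + p.2 * (p.2 * (|Int.gcdB p.2 b| + 1)), fun _ => ⟨?_, ?_⟩⟩
    · have h1 : 0 < p.2 * p.2 := mul_self_pos.2 hs
      have h2 := neg_abs_le (Int.gcdB p.2 b)
      have h3 := abs_nonneg (Int.gcdB p.2 b)
      nlinarith
    · rw [hc, hb]
      exact ⟨b * (p.2 * (|Int.gcdB p.2 b| + 1)) - Int.gcdA p.2 b, by ring⟩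
  · exact ⟨1, fun h => absurd h hV⟩

/-- For large `b` in a fixed residue class modulo `s`, the solutions `k` of `b ∣ r + s k` are the
class of `k₀ = bθ/c - α` modulo `b/c`, where `θ = ⟨eα⟩` does not depend on `b`. -/
lemma eventually_dvd_iff_modEq {p : ℤ × ℤ} (hs : p.2 ≠ 0) (hα : ¬ IsNonPosInt (ratOf p)) {b₀ : ℕ}
    (hb₀ : 1 ≤ b₀) (hV : inV p b₀) {e : ℤ} (he : goodChoice p b₀ e) :
    ∀ᶠ b : ℕ in Filter.atTop, p.2 ∣ (b : ℤ) - b₀ → ∃ k₀ b' : ℕ, b = cOf p b₀ * b' ∧ k₀ < b' ∧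
      (k₀ : ℝ) = b * cangle (((e : ℚ) * ratOf p : ℚ) : ℝ) / cOf p b₀ - (ratOf p : ℝ) ∧
      ∀ k : ℕ, (b : ℤ) ∣ p.1 + p.2 * k ↔ k ≡ k₀ [MOD b'] := by
  obtain ⟨r, s⟩ := p
  simp only at hs ⊢
  obtain ⟨-, he⟩ := he hV
  simp only at he
  set c := cOf (r, s) b₀ with hc
  have hc0 : 0 < c := Nat.gcd_pos_of_pos_right _ hb₀
  have hcb : c ∣ b₀ := Nat.gcd_dvd_right _ _
  have hcg : (c : ℤ) ∣ (Int.gcd r s : ℤ) := Int.natCast_dvd_natCast.2 (Nat.gcd_dvd_left _ _)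
  obtain ⟨r', hr'⟩ : (c : ℤ) ∣ r := hcg.trans (Int.gcd_dvd_left _ _)
  obtain ⟨s', hs'⟩ : (c : ℤ) ∣ s := hcg.trans (Int.gcd_dvd_right _ _)
  obtain ⟨b₀', hb₀'⟩ := hcb
  have hcz : (c : ℤ) ≠ 0 := by positivity
  have hs0 : s' ≠ 0 := by rintro rfl; simp at hs'; exact hs hs'
  have hsR : (s' : ℝ) ≠ 0 := by exact_mod_cast hs0
  have hαeq : ratOf (r, s) = (r' : ℚ) / s' := by
    simp only [ratOf]
    rw [hr', hs']; push_cast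
    exact mul_div_mul_left _ _ (by exact_mod_cast hcz)
  rw [hαeq]
  rw [hαeq] at hα
  set θ := cangle (((e : ℚ) * ((r' : ℚ) / s') : ℚ) : ℝ) with hθ
  have hθ0 : 0 < θ := cangle_pos _
  have hθ1 : θ ≤ 1 := cangle_le_one _
  obtain ⟨j, hj⟩ := exists_cangle_eq_sub (((e : ℚ) * ((r' : ℚ) / s') : ℚ) : ℝ)
  rw [← hθ] at hj
  push_cast at hj
  have hcR : (0 : ℝ) < c := by exact_mod_cast hc0
  have ev1 : ∀ᶠ b : ℕ in Filter.atTop, (r' : ℝ) / s' * c / θ ≤ b :=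
    tendsto_natCast_atTop_atTop.eventually_ge_atTop _
  have ev2 : ∀ᶠ b : ℕ in Filter.atTop, -((r' : ℝ) / s') * c / (1 - θ) < b :=
    tendsto_natCast_atTop_atTop.eventually_gt_atTop _
  filter_upwards [ev1, ev2, Filter.eventually_gt_atTop 0] with b h1 h2 hbpos hbs
  obtain ⟨t, ht⟩ := hbs
  obtain ⟨b', hb'⟩ : c ∣ b := by
    rw [← Int.natCast_dvd_natCast]
    exact ⟨b₀' + s' * t, by rw [hb₀', hs'] at ht; push_cast at ht; linarith⟩
  have hb'0 : 0 < b' := Nat.pos_of_mul_pos_left (hb' ▸ hbpos)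
  obtain ⟨f, hf⟩ : s' ∣ b' * e - 1 := by
    obtain ⟨g, hg⟩ := he
    refine ⟨g + t * e, ?_⟩
    apply mul_left_cancel₀ hcz
    have : (b : ℤ) = c * b' := by exact_mod_cast hb'
    rw [this] at ht
    rw [hs'] at hg ht
    linear_combination hg + e * ht
  set K : ℤ := r' * f - b' * j with hK
  have hsK : s' * K = b' * (e * r' - j * s') - r' := by
    rw [hK]; linear_combination (-r') * hf
  have hbR : (b : ℝ) = c * b' := by exact_mod_cast hb'
  have hKR : (K : ℝ) = b * θ / c - (r' : ℝ) / s' := by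
    have hsKR : (s' : ℝ) * K = b' * (e * r' - j * s') - r' := by exact_mod_cast hsK
    rw [hj, hbR]
    field_simp
    linarith
  have hK0 : 0 ≤ K := by
    have : (0 : ℝ) ≤ K := by
      rw [hKR, sub_nonneg, le_div_iff₀ hcR]
      exact (div_le_iff₀ hθ0).1 h1
    exact_mod_cast this
  have hKb : K < b' := by
    have : (K : ℝ) < b' := by
      rw [hKR, hbR, mul_assoc, mul_div_cancel_left₀ _ hcR.ne']
      rcases hθ1.lt_or_eq with hlt | heq
      · rw [div_lt_iff₀ (by linarith), hbR] at h2
        have : (c : ℝ) * (-((r' : ℝ) / s')) < c * (b' * (1 - θ)) := by linarith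
        have := lt_of_mul_lt_mul_left this hcR.le
        linarith
      · have hm : s' ∣ r' := by
          have h3 : (e : ℝ) * r' = s' * (1 + j) := by
            rw [heq] at hj
            field_simp at hj
            linarith
          have h4 : e * r' = s' * (1 + j) := by exact_mod_cast h3
          exact ⟨b' * (1 + j) - f * r', by linear_combination (-r') * hf + b' * h4⟩
        obtain ⟨z, hz⟩ := hm
        have hzR : (r' : ℝ) / s' = z := by rw [hz]; push_cast; field_simp
        have hz0 : 0 < z := by
          by_contra hneg
          refine hα ⟨z, not_lt.1 hneg, ?_⟩
          have : (s' : ℚ) ≠ 0 := by exact_mod_cast hs0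
          rw [hz]; push_cast; field_simp
        have : (0 : ℝ) < z := by exact_mod_cast hz0
        rw [hzR, heq]; linarith
    exact_mod_cast this
  refine ⟨K.toNat, b', hb', by omega, ?_, fun k => ?_⟩
  · have : ((K.toNat : ℤ) : ℝ) = K := by rw [Int.toNat_of_nonneg hK0]
    rw [← Int.cast_natCast, this, hKR]
    push_cast
    rfl
  · rw [Nat.modEq_iff_dvd, Int.toNat_of_nonneg hK0, hr', hs', hb']
    push_cast
    rw [mul_assoc, ← mul_add, mul_dvd_mul_iff_left hcz]
    have hcop : IsCoprime (b' : ℤ) s' := ⟨e, -f, by linear_combination hf⟩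
    have h5 : r' + s' * k = b' * (e * r' - j * s') - s' * (K - k) := by linear_combination hsK
    rw [h5, dvd_sub_right (Dvd.intro _ rfl)]
    exact ⟨fun h => hcop.dvd_of_dvd_mul_left h, fun h => h.mul_left _⟩

lemma card_modEq_eq {c b' k₀ n : ℕ} (hk : k₀ < b') (hn : n ≤ c * b') :
    ((Finset.range n).filter fun k => k ≡ k₀ [MOD b']).card
      = ((Finset.range c).filter fun l => k₀ + l * b' < n).card := by
  symm
  refine Finset.card_nbij (fun l => k₀ + l * b') ?_ ?_ ?_
  · intro l hl
    simp only [Finset.coe_filter, Finset.mem_range, Set.mem_ofPred_eq] at hl ⊢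
    refine ⟨hl.2, ?_⟩
    simp [Nat.ModEq]
  · intro l _ l' _ h
    simp only at h
    exact Nat.eq_of_mul_eq_mul_right (by omega : 0 < b') (by omega)
  · intro k hk'
    simp only [Finset.coe_filter, Finset.mem_range, Set.mem_ofPred_eq, Set.mem_image] at hk' ⊢
    have h1 : k % b' = k₀ := by have := hk'.2; rwa [Nat.ModEq, Nat.mod_eq_of_lt hk] at this
    have h2 := Nat.mod_add_div k b'
    refine ⟨k / b', ⟨?_, ?_⟩, ?_⟩
    · rw [Nat.div_lt_iff_lt_mul (by omega)]; omega
    · rw [mul_comm]; omega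
    · rw [mul_comm]; omega

/-- For large `b` in a fixed residue class modulo all the `s_i`, the divisibility counts of the
pairs are controlled by the generalized Christol step function. -/
lemma eventually_divCount_nonneg_iff {ι : Type*} [Fintype ι] (p : ι → ℤ × ℤ) (σ : ι → ℤ)
    (hs : ∀ i, (p i).2 ≠ 0) (hα : ∀ i, ¬ IsNonPosInt (ratOf (p i))) {b₀ : ℕ} (hb₀ : 1 ≤ b₀)
    {a : ℤ} (ha : 0 < a) {e : ι → ℤ} (he : ∀ i, goodChoice (p i) b₀ (e i)) :
    ∀ᶠ b : ℕ in Filter.atTop, (∀ i, (p i).2 ∣ (b : ℤ) - b₀) →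
      ((∀ n, 0 ≤ ∑ i, σ i * divCount (p i) b n) ↔
        ∀ x : ℝ, 0 ≤ ∑ i, σ i * XiCount (p i) b₀ a (e i) x) := by
  set θ : ι → ℝ := fun i => cangle (((e i : ℚ) * ratOf (p i) : ℚ) : ℝ) with hθ
  set c : ι → ℕ := fun i => cOf (p i) b₀ with hc
  have hc0 : ∀ i, 0 < c i := fun i => Nat.gcd_pos_of_pos_right _ hb₀
  set J : Finset ((_ : ι) × ℕ) :=
    (Finset.univ.filter fun i => inV (p i) b₀).sigma fun i => Finset.range (c i) with hJ
  set y : (_ : ι) × ℕ → ℝ := fun j => (θ j.1 + j.2) / c j.1 with hy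
  set pos : ℕ → (_ : ι) × ℕ → ℝ := fun b j => b * y j - (ratOf (p j.1) : ℝ) with hpos
  set jp : (_ : ι) × ℕ → ℝ := fun j => jumpPt (p j.1) b₀ a (e j.1) j.2 with hjp
  have hXi : ∀ x, ∑ i, σ i * (XiCount (p i) b₀ a (e i) x : ℤ) =
      ∑ j ∈ J with cle (jp j) x, σ j.1 := by
    intro x
    rw [Finset.sum_filter, hJ, Finset.sum_sigma, Finset.sum_filter]
    refine Finset.sum_congr rfl fun i _ => ?_
    unfold XiCount
    split_ifs with h
    · rw [← Finset.sum_filter]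
      refine Eq.trans ?_ (Finset.sum_const (σ i)).symm
      rw [nsmul_eq_mul, mul_comm]
    · simp
  have hsep : ∀ᶠ b : ℕ in Filter.atTop, ∀ j ∈ J, ∀ j' ∈ J, y j < y j' → pos b j < pos b j' := by
    rw [Filter.eventually_all_finset]
    intro j _
    rw [Filter.eventually_all_finset]
    intro j' _
    have : ∀ᶠ b : ℕ in Filter.atTop,
        ((ratOf (p j'.1) : ℝ) - ratOf (p j.1)) / (y j' - y j) < b :=
      tendsto_natCast_atTop_atTop.eventually_gt_atTop _
    filter_upwards [this] with b hb hlt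
    rw [div_lt_iff₀ (sub_pos.2 hlt)] at hb
    simp only [hpos]
    linarith
  have hcls : ∀ᶠ b : ℕ in Filter.atTop, ∀ i, inV (p i) b₀ → (p i).2 ∣ (b : ℤ) - b₀ →
      ∃ k₀ b' : ℕ, b = c i * b' ∧ k₀ < b' ∧ (k₀ : ℝ) = b * θ i / c i - (ratOf (p i) : ℝ) ∧
        ∀ k : ℕ, (b : ℤ) ∣ (p i).1 + (p i).2 * k ↔ k ≡ k₀ [MOD b'] := by
    rw [Filter.eventually_all]
    intro i
    by_cases hV : inV (p i) b₀
    · filter_upwards [eventually_dvd_iff_modEq (hs i) (hα i) hb₀ hV (he i)] with b hb _ h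
      exact hb h
    · exact Filter.Eventually.of_forall fun b h => absurd h hV
  filter_upwards [hsep, hcls, Filter.eventually_gt_atTop 0] with b hsep hcls hb hdvd
  have hmemJ : ∀ j, j ∈ J ↔ inV (p j.1) b₀ ∧ j.2 < c j.1 := by
    intro j
    simp [hJ, Finset.mem_sigma]
  have hposNat : ∀ j ∈ J, ∃ k : ℕ, k < b ∧ pos b j = k := by
    intro j hj
    rw [hmemJ] at hj
    obtain ⟨k₀, b', hbb, hk, hkR, -⟩ := hcls j.1 hj.1 (hdvd _)
    refine ⟨k₀ + j.2 * b', ?_, ?_⟩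
    · have : (j.2 + 1) * b' ≤ c j.1 * b' := Nat.mul_le_mul_right _ hj.2
      rw [hbb]
      linarith [add_mul j.2 1 b']
    · have hcR : (c j.1 : ℝ) ≠ 0 := by exact_mod_cast (hc0 j.1).ne'
      have hbR : (b : ℝ) = c j.1 * b' := by exact_mod_cast hbb
      push_cast
      rw [hkR]
      simp only [hpos, hy]
      rw [hbR]
      field_simp
      ring
  have hcount : ∀ n ≤ b, ∑ i, σ i * (divCount (p i) b n : ℤ) =
      ∑ j ∈ J with pos b j < n, σ j.1 := by
    intro n hn
    rw [Finset.sum_filter, hJ, Finset.sum_sigma, Finset.sum_filter]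
    refine Finset.sum_congr rfl fun i _ => ?_
    split_ifs with h
    · rw [← Finset.sum_filter]
      refine Eq.trans ?_ (Finset.sum_const (σ i)).symm
      rw [nsmul_eq_mul, mul_comm]
      congr 2
      obtain ⟨k₀, b', hbb, hk, hkR, hiff⟩ := hcls i h (hdvd _)
      unfold divCount
      simp only [hiff]
      rw [card_modEq_eq hk (hbb ▸ hn)]
      congr 1
      ext l
      simp only [Finset.mem_filter, and_congr_right_iff]
      intro _
      have hcR : (c i : ℝ) ≠ 0 := by exact_mod_cast (hc0 i).ne'
      have hbR : (b : ℝ) = c i * b' := by exact_mod_cast hbb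
      have : pos b ⟨i, l⟩ = ((k₀ + l * b' : ℕ) : ℝ) := by
        push_cast
        rw [hkR]
        simp only [hpos, hy]
        rw [hbR]
        field_simp
        ring
      rw [this, Nat.cast_lt]
    · rw [divCount_eq_zero fun h' => h ((inV_congr (hdvd i)).1 h')]
      simp
  have hy01 : ∀ j ∈ J, 0 < y j ∧ y j ≤ 1 := by
    intro j hj
    rw [hmemJ] at hj
    have hcR : (0 : ℝ) < c j.1 := by exact_mod_cast hc0 j.1
    have h1 : 0 < θ j.1 := cangle_pos _
    have h2 : θ j.1 ≤ 1 := cangle_le_one _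
    have h3 : (j.2 : ℝ) + 1 ≤ c j.1 := by exact_mod_cast hj.2
    refine ⟨by positivity, ?_⟩
    rw [div_le_one hcR]
    linarith
  have hjpy : ∀ j ∈ J, cangle (jp j) = y j := fun j hj =>
    cangle_sub_int (hy01 j hj).1 (hy01 j hj).2 _
  have hord : ∀ j ∈ J, ∀ j' ∈ J, cle (jp j) (jp j') ↔ pos b j ≤ pos b j' := by
    intro j hj j' hj'
    unfold cle
    rw [hjpy j hj, hjpy j' hj']
    rcases lt_trichotomy (y j) (y j') with h | h | h
    · simp [h, (hsep j hj j' hj' h).le]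
    · obtain ⟨k, -, hk⟩ := hposNat j hj
      obtain ⟨k', -, hk'⟩ := hposNat j' hj'
      set z : ℤ := k' - k with hz
      have hpos' : pos b j' = pos b j + z := by rw [hk, hk', hz]; push_cast; ring
      have hzα : ratOf (p j.1) = ratOf (p j'.1) + z := by
        have : (ratOf (p j.1) : ℝ) = ratOf (p j'.1) + z := by
          simp only [hpos, h] at hpos'
          linarith
        exact_mod_cast this
      have hfl : ⌊1 - (a : ℚ) * ratOf (p j.1)⌋ = ⌊1 - (a : ℚ) * ratOf (p j'.1)⌋ - a * z := by
        rw [← Int.floor_sub_intCast, hzα]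
        congr 1
        push_cast
        ring
      have hjj : jp j = jp j' + a * z := by
        have h1 : jp j = y j - (⌊1 - (a : ℚ) * ratOf (p j.1)⌋ : ℤ) := rfl
        have h2 : jp j' = y j' - (⌊1 - (a : ℚ) * ratOf (p j'.1)⌋ : ℤ) := rfl
        rw [h1, h2, hfl, h]
        push_cast
        ring
      have haR : (0 : ℝ) < a := by exact_mod_cast ha
      simp only [h, lt_irrefl, true_and, false_or]
      rw [hpos', hjj, le_add_iff_nonneg_right, le_add_iff_nonneg_right,
        mul_nonneg_iff_of_pos_left haR]
    · simp [h.not_gt, h.ne', (hsep j' hj' j hj h)]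
  have hle : (∀ n, 0 ≤ ∑ i, σ i * (divCount (p i) b n : ℤ)) ↔
      ∀ j ∈ J, 0 ≤ ∑ j' ∈ J with pos b j' ≤ pos b j, σ j'.1 := by
    have hsm : ∀ j ∈ J, ∃ n ≤ b, ∀ j' ∈ J, pos b j' ≤ pos b j ↔ pos b j' < n := by
      intro j hj
      obtain ⟨k, hk, hkp⟩ := hposNat j hj
      refine ⟨k + 1, hk, fun j' hj' => ?_⟩
      obtain ⟨k', -, hkp'⟩ := hposNat j' hj'
      rw [hkp, hkp', Nat.cast_le, Nat.cast_lt, Nat.lt_succ_iff]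
    constructor
    · intro h j hj
      obtain ⟨n, hn, hiff⟩ := hsm j hj
      have := h n
      rw [hcount n hn] at this
      convert this using 2
      exact Finset.filter_congr hiff
    · intro h
      have hsmall : ∀ n ≤ b, 0 ≤ ∑ i, σ i * (divCount (p i) b n : ℤ) := by
        intro n hn
        rw [hcount n hn]
        have := sum_filter_le_nonneg J (pos b) (fun j => σ j.1) h ((n : ℝ) - 1)
        convert this using 2
        refine Finset.filter_congr fun j hj => ?_
        obtain ⟨k, -, hk⟩ := hposNat j hj
        rw [hk, le_sub_iff_add_le, Nat.cast_lt, ← Nat.cast_succ, Nat.cast_le, Nat.succ_le_iff]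
      intro n
      induction n using Nat.strong_induction_on with
      | _ n ih =>
        by_cases hn : n ≤ b
        · exact hsmall n hn
        · obtain ⟨m, rfl⟩ : ∃ m, n = m + b := ⟨n - b, by omega⟩
          simp only [divCount_add, Nat.cast_add, mul_add, Finset.sum_add_distrib]
          exact add_nonneg (ih m (by omega)) (hsmall b le_rfl)
  rw [hle]
  simp only [hXi]
  have hswap : ∀ j ∈ J, ∑ j' ∈ J with pos b j' ≤ pos b j, σ j'.1 =
      ∑ j' ∈ J with cle (jp j') (jp j), σ j'.1 := fun j hj =>
    Finset.sum_congr (Finset.filter_congr fun j' hj' => (hord j' hj' j hj).symm) fun _ _ => rfl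
  constructor
  · intro h x
    simp only [cle_iff_toLex_le]
    refine sum_filter_le_nonneg J
      (fun j => toLex (cangle (jp j), OrderDual.toDual (jp j))) (fun j => σ j.1) ?_ _
    intro j hj
    simp only [← cle_iff_toLex_le]
    rw [← hswap j hj]
    exact h j hj
  · intro h j hj
    rw [hswap j hj]
    exact h _

/-- The embedding of `ℤ[q]` into `ℚ(q)`. -/
noncomputable def polyZHom : Polynomial ℤ →+* RatFunc ℚ :=
  (algebraMap (Polynomial ℚ) (RatFunc ℚ)).comp (Polynomial.mapRingHom (Int.castRingHom ℚ))

lemma polyZHom_apply (g : Polynomial ℤ) : polyZHom g = polyZ g := rfl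

lemma polyZHom_injective : Function.Injective polyZHom :=
  (RatFunc.algebraMap_injective ℚ).comp (Polynomial.map_injective _ Int.cast_injective)

lemma polyZHom_X : polyZHom Polynomial.X = RatFunc.X := by
  rw [polyZHom_apply, polyZ, Polynomial.map_X, RatFunc.algebraMap_X]

lemma isIntPoly_iff_mem_range (f : RatFunc ℚ) : IsIntPoly f ↔ f ∈ polyZHom.range :=
  ⟨fun ⟨g, hg⟩ => ⟨g, hg.symm⟩, fun ⟨g, hg⟩ => ⟨g, hg.symm⟩⟩

lemma eq_of_cyclotomic_dvd_cyclotomic {a b : ℕ} (ha : 0 < a) (hb : 0 < b)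
    (h : cyclotomic a ℤ ∣ cyclotomic b ℤ) : a = b := by
  refine cyclotomic_injective (R := ℤ) (eq_of_monic_of_associated (cyclotomic.monic _ _)
    (cyclotomic.monic _ _) ?_)
  exact (cyclotomic.irreducible ha).associated_of_dvd (cyclotomic.irreducible hb) h

lemma eventually_not_cyclotomic_dvd {D : Polynomial ℤ} (hD : D ≠ 0) :
    ∀ᶠ b : ℕ in Filter.atTop, ¬ cyclotomic b ℤ ∣ D := by
  have hD' : D.map (Int.castRingHom ℚ) ≠ 0 :=
    (Polynomial.map_ne_zero_iff (Int.castRingHom ℚ).injective_int).2 hD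
  have hfin : (((UniqueFactorizationMonoid.normalizedFactors
      (D.map (Int.castRingHom ℚ))).toFinset : Set ℚ[X])).Finite := Finset.finite_toSet _
  have hpre := hfin.preimage (cyclotomic_injective (R := ℚ)).injOn
  have hev := hpre.eventually_cofinite_notMem
  rw [Nat.cofinite_eq_atTop] at hev
  filter_upwards [hev, Filter.eventually_gt_atTop 0] with b hb hb0 hdvd
  apply hb
  rw [Set.mem_preimage, Finset.mem_coe, Multiset.mem_toFinset,
    UniqueFactorizationMonoid.mem_normalizedFactors_iff' hD']
  refine ⟨cyclotomic.irreducible_rat hb0, (cyclotomic.monic _ _).normalize_eq_self, ?_⟩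
  rw [← map_cyclotomic_int b ℚ]
  exact Polynomial.map_dvd _ hdvd

/-- Cyclotomic factorization of `1 - q ^ m` in `ℚ(q)`. -/
lemma one_sub_X_zpow_eq {m : ℤ} (hm : m ≠ 0) {M : ℕ} (hM : m.natAbs ≤ M) :
    ∃ ε : ℤˣ, (1 - RatFunc.X ^ m : RatFunc ℚ) = ((ε : ℤ) : RatFunc ℚ) * RatFunc.X ^ (min m 0) *
      ∏ b ∈ Finset.Icc 1 M, polyZHom (cyclotomic b ℤ) ^ (if (b : ℤ) ∣ m then 1 else 0) := by
  have hX : (RatFunc.X : RatFunc ℚ) ≠ 0 := RatFunc.X_ne_zero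
  have hprod : ∏ b ∈ Finset.Icc 1 M, polyZHom (cyclotomic b ℤ) ^ (if (b : ℤ) ∣ m then 1 else 0)
      = RatFunc.X ^ m.natAbs - 1 := by
    have h1 := congrArg polyZHom (prod_cyclotomic_eq_X_pow_sub_one (Int.natAbs_pos.2 hm) ℤ)
    rw [map_prod, map_sub, map_pow, map_one, polyZHom_X] at h1
    rw [← h1]
    simp only [pow_ite, pow_one, pow_zero]
    rw [← Finset.prod_filter]
    refine Finset.prod_congr ?_ fun _ _ => rfl
    ext b
    simp only [Finset.mem_filter, Finset.mem_Icc, Nat.mem_divisors, Int.natCast_dvd]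
    constructor
    · exact fun h => ⟨h.2, Int.natAbs_ne_zero.2 hm⟩
    · exact fun h => ⟨⟨Nat.pos_of_dvd_of_pos h.1 (Int.natAbs_pos.2 hm),
        (Nat.le_of_dvd (Int.natAbs_pos.2 hm) h.1).trans hM⟩, h.1⟩
  rw [hprod]
  rcases lt_or_gt_of_ne hm with h | h
  · refine ⟨1, ?_⟩
    have h2 : (RatFunc.X : RatFunc ℚ) ^ m.natAbs = RatFunc.X ^ (-m) := by
      rw [← zpow_natCast]; congr 1; omega
    rw [h2, min_eq_left h.le, zpow_neg]
    have := zpow_ne_zero m hX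
    field_simp
    simp
  · refine ⟨-1, ?_⟩
    have h2 : (RatFunc.X : RatFunc ℚ) ^ m.natAbs = RatFunc.X ^ m := by
      rw [← zpow_natCast]; congr 1; omega
    rw [h2, min_eq_right h.le]
    simp

lemma qPoch_eq {p : ℤ × ℤ} (hp : ∀ k : ℕ, p.1 + p.2 * k ≠ 0) {n M : ℕ}
    (hM : ∀ k < n, (p.1 + p.2 * (k : ℤ)).natAbs ≤ M) :
    ∃ ε : ℤˣ, qPoch p.1 p.2 n = ((ε : ℤ) : RatFunc ℚ) *
      RatFunc.X ^ (∑ k ∈ Finset.range n, min (p.1 + p.2 * (k : ℤ)) 0) *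
      ∏ b ∈ Finset.Icc 1 M, polyZHom (cyclotomic b ℤ) ^ divCount p b n := by
  induction n with
  | zero => exact ⟨1, by simp [qPoch, divCount]⟩
  | succ n ih =>
    obtain ⟨ε, hε⟩ := ih fun k hk => hM k (by omega)
    obtain ⟨ε', hε'⟩ := one_sub_X_zpow_eq (hp n) (hM n (by omega))
    refine ⟨ε * ε', ?_⟩
    have hc : ∀ b, divCount p b (n + 1)
        = divCount p b n + if (b : ℤ) ∣ p.1 + p.2 * n then 1 else 0 := by
      intro b
      unfold divCount
      rw [Finset.range_add_one, Finset.filter_insert]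
      split_ifs with h
      · rw [Finset.card_insert_of_notMem (by simp)]
      · rfl
    rw [qPoch, Finset.prod_range_succ, ← qPoch, hε, hε', Finset.sum_range_succ,
      zpow_add₀ RatFunc.X_ne_zero]
    simp only [hc, pow_add, Finset.prod_mul_distrib]
    push_cast
    ring

lemma add_mul_ne_zero_of_not_isNonPosInt {p : ℤ × ℤ} (hs : p.2 ≠ 0)
    (h : ¬ IsNonPosInt (ratOf p)) (k : ℕ) : p.1 + p.2 * k ≠ 0 := by
  intro h0
  refine h ⟨-k, by simp, ?_⟩
  have : (p.2 : ℚ) ≠ 0 := by exact_mod_cast hs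
  have h1 : (p.1 : ℚ) = -(p.2 * k) := by
    have : p.1 = -(p.2 * k) := by linarith
    exact_mod_cast this
  rw [ratOf, h1]
  push_cast
  field_simp

lemma prod_zpow_eq_zpow_sum {ι F : Type*} [Field F] {x : F} (hx : x ≠ 0) (S : Finset ι)
    (f : ι → ℤ) : ∏ i ∈ S, x ^ f i = x ^ ∑ i ∈ S, f i := by
  induction S using Finset.induction_on with
  | empty => simp
  | insert i S hi ih => rw [Finset.prod_insert hi, Finset.sum_insert hi, zpow_add₀ hx, ih]

lemma prod_qPoch_eq {ι : Type*} [Fintype ι] {p : ι → ℤ × ℤ}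
    (hp : ∀ i, ∀ k : ℕ, (p i).1 + (p i).2 * k ≠ 0) {n M : ℕ}
    (hM : ∀ i, ∀ k < n, ((p i).1 + (p i).2 * (k : ℤ)).natAbs ≤ M) :
    ∃ ε : ℤˣ, ∏ i, qPoch (p i).1 (p i).2 n = ((ε : ℤ) : RatFunc ℚ) *
      RatFunc.X ^ (∑ i, ∑ k ∈ Finset.range n, min ((p i).1 + (p i).2 * (k : ℤ)) 0) *
      ∏ b ∈ Finset.Icc 1 M, polyZHom (cyclotomic b ℤ) ^ ∑ i, divCount (p i) b n := by
  choose ε hε using fun i => qPoch_eq (hp i) (hM i)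
  refine ⟨∏ i, ε i, ?_⟩
  simp only [hε, Finset.prod_mul_distrib]
  rw [Finset.prod_comm]
  simp only [Finset.prod_pow_eq_pow_sum]
  congr 2
  · push_cast; rfl
  · exact prod_zpow_eq_zpow_sum RatFunc.X_ne_zero _ _

lemma eventually_natAbs_le {ι : Type*} [Fintype ι] (p : ι → ℤ × ℤ) (n : ℕ) :
    ∀ᶠ M : ℕ in Filter.atTop, ∀ i, ∀ k < n, ((p i).1 + (p i).2 * (k : ℤ)).natAbs ≤ M := by
  rw [Filter.eventually_all]
  intro i
  have h := (Filter.eventually_all_finset (Finset.range n) (l := Filter.atTop)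
    (p := fun k (M : ℕ) => ((p i).1 + (p i).2 * (k : ℤ)).natAbs ≤ M)).2
      fun k _ => Filter.eventually_ge_atTop _
  filter_upwards [h] with M hM k hk using hM k (Finset.mem_range.2 hk)

/-- Cyclotomic factorization of the q-hypergeometric term. -/
lemma eventually_qHyp_eq {v w : ℕ} {rr : Fin v → ℤ × ℤ} {tt : Fin w → ℤ × ℤ}
    (hr : ∀ i, ∀ k : ℕ, (rr i).1 + (rr i).2 * k ≠ 0)
    (ht : ∀ j, ∀ k : ℕ, (tt j).1 + (tt j).2 * k ≠ 0) (n : ℕ) :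
    ∀ᶠ M : ℕ in Filter.atTop, ∃ ε : ℤˣ, qHyp rr tt n = ((ε : ℤ) : RatFunc ℚ) *
      RatFunc.X ^ ((∑ i, ∑ k ∈ Finset.range n, min ((rr i).1 + (rr i).2 * (k : ℤ)) 0) -
        ∑ j, ∑ k ∈ Finset.range n, min ((tt j).1 + (tt j).2 * (k : ℤ)) 0) *
      ∏ b ∈ Finset.Icc 1 M, polyZHom (cyclotomic b ℤ) ^
        (∑ i, (divCount (rr i) b n : ℤ) - ∑ j, (divCount (tt j) b n : ℤ)) := by
  filter_upwards [eventually_natAbs_le rr n, eventually_natAbs_le tt n] with M h1 h2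
  obtain ⟨ε, hε⟩ := prod_qPoch_eq hr h1
  obtain ⟨ε', hε'⟩ := prod_qPoch_eq ht h2
  refine ⟨ε * ε', ?_⟩
  have hcyc : ∀ b, polyZHom (cyclotomic b ℤ) ≠ 0 := fun b =>
    (map_ne_zero_iff _ polyZHom_injective).2 (cyclotomic_ne_zero _ _)
  have hpow : ∀ b, polyZHom (cyclotomic b ℤ) ^
        (∑ i, (divCount (rr i) b n : ℤ) - ∑ j, (divCount (tt j) b n : ℤ)) =
      polyZHom (cyclotomic b ℤ) ^ (∑ i, divCount (rr i) b n) /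
        polyZHom (cyclotomic b ℤ) ^ (∑ j, divCount (tt j) b n) := by
    intro b
    rw [zpow_sub₀ (hcyc b), ← Nat.cast_sum, ← Nat.cast_sum, zpow_natCast, zpow_natCast]
  have hu : (((ε' : ℤ) : RatFunc ℚ))⁻¹ = ((ε' : ℤ) : RatFunc ℚ) := by
    rcases Int.units_eq_one_or ε' with h | h <;> simp [h]
  simp only [hpow]
  rw [qHyp, hε, hε', Finset.prod_div_distrib, zpow_sub₀ RatFunc.X_ne_zero, mul_div_mul_comm,
    mul_div_mul_comm, div_eq_mul_inv (((ε : ℤ) : RatFunc ℚ)), hu]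
  push_cast
  rfl

/-- q-integrality is equivalent to nonnegativity of the `φ_b`-valuations for all large `b`. -/
lemma qIntegral_iff_eventually {v w : ℕ} {rr : Fin v → ℤ × ℤ} {tt : Fin w → ℤ × ℤ}
    (hs : ∀ i, 0 < (rr i).2) (hr : ∀ i, ∀ k : ℕ, (rr i).1 + (rr i).2 * k ≠ 0)
    (ht : ∀ j, ∀ k : ℕ, (tt j).1 + (tt j).2 * k ≠ 0) :
    (∃ C : Polynomial ℤ, C ≠ 0 ∧ ∀ n : ℕ, IsIntPoly (polyZ C ^ n * qHyp rr tt n)) ↔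
      ∀ᶠ b : ℕ in Filter.atTop, ∀ n,
        0 ≤ ∑ i, (divCount (rr i) b n : ℤ) - ∑ j, (divCount (tt j) b n : ℤ) := by
  have hcyc : ∀ b, polyZHom (cyclotomic b ℤ) ≠ 0 := fun b =>
    (map_ne_zero_iff _ polyZHom_injective).2 (cyclotomic_ne_zero _ _)
  have hX : (RatFunc.X : RatFunc ℚ) ≠ 0 := RatFunc.X_ne_zero
  constructor
  · rintro ⟨C, hC, hint⟩
    filter_upwards [eventually_not_cyclotomic_dvd (mul_ne_zero hC Polynomial.X_ne_zero),
      Filter.eventually_gt_atTop 0] with b hb hb0 n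
    by_contra hneg
    rw [not_le] at hneg
    obtain ⟨M, hbM, ε, hε⟩ :=
      ((Filter.eventually_ge_atTop b).and (eventually_qHyp_eq hr ht n)).exists
    set z : ℤ := _ - _ with hz
    set E : ℕ → ℤ := fun b => ∑ i, (divCount (rr i) b n : ℤ) - ∑ j, (divCount (tt j) b n : ℤ)
      with hE
    obtain ⟨G, hG⟩ := hint n
    have hsplit : ∀ (x : RatFunc ℚ), x ≠ 0 → ∀ m : ℤ,
        x ^ m * x ^ (-m).toNat = x ^ m.toNat := by
      intro x hx m
      rw [← zpow_natCast, ← zpow_natCast, ← zpow_add₀ hx]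
      congr 1
      omega
    have hmain : C ^ n * (((ε : ℤ) : ℤ[X]) * X ^ z.toNat *
        ∏ b ∈ Finset.Icc 1 M, cyclotomic b ℤ ^ (E b).toNat) =
        G * (X ^ (-z).toNat * ∏ b ∈ Finset.Icc 1 M, cyclotomic b ℤ ^ (-E b).toNat) := by
      apply polyZHom_injective
      simp only [map_mul, map_pow, map_prod, polyZHom_X, map_intCast]
      have hprod := Finset.prod_congr rfl fun b (_ : b ∈ Finset.Icc 1 M) => hsplit _ (hcyc b) (E b)
      rw [Finset.prod_mul_distrib] at hprod
      rw [polyZHom_apply, polyZHom_apply, ← hG, hε, ← hsplit _ hX z, ← hprod]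
      ring
    have hprime : Prime (cyclotomic b ℤ) := (cyclotomic.irreducible hb0).prime
    have hbS : b ∈ Finset.Icc 1 M := Finset.mem_Icc.2 ⟨hb0, hbM⟩
    have hdvd : cyclotomic b ℤ ∣ C ^ n * (((ε : ℤ) : ℤ[X]) * X ^ z.toNat *
        ∏ b ∈ Finset.Icc 1 M, cyclotomic b ℤ ^ (E b).toNat) := by
      rw [hmain]
      refine Dvd.dvd.mul_left (Dvd.dvd.mul_left ?_ _) _
      refine (dvd_pow_self _ ?_).trans (Finset.dvd_prod_of_mem _ hbS)
      have : E b < 0 := hneg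
      omega
    rcases hprime.dvd_or_dvd hdvd with h | h
    · exact hb ((hprime.dvd_of_dvd_pow h).mul_right _)
    rcases hprime.dvd_or_dvd h with h | h
    · rcases hprime.dvd_or_dvd h with h | h
      · refine hprime.not_isUnit (isUnit_of_dvd_unit h ?_)
        rcases Int.units_eq_one_or ε with h | h <;> simp [h]
      · exact hb ((hprime.dvd_of_dvd_pow h).mul_left _)
    · obtain ⟨b', hb', h⟩ := (hprime.dvd_finsetProd_iff _).1 h
      have := eq_of_cyclotomic_dvd_cyclotomic hb0 (Finset.mem_Icc.1 hb').1
        (hprime.dvd_of_dvd_pow h)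
      subst this
      have h0 : (E b).toNat = 0 := by
        have : E b < 0 := hneg
        omega
      rw [h0, pow_zero] at h
      exact hprime.not_isUnit (isUnit_of_dvd_one h)
  · intro hev
    obtain ⟨B, hB⟩ := Filter.eventually_atTop.1 hev
    set K : ℕ := ∑ i, (rr i).1.natAbs with hK
    refine ⟨X ^ K * ∏ b ∈ Finset.Icc 1 B, cyclotomic b ℤ ^ w, ?_, fun n => ?_⟩
    · exact mul_ne_zero (pow_ne_zero _ X_ne_zero)
        (Finset.prod_ne_zero_iff.2 fun b _ => pow_ne_zero _ (cyclotomic_ne_zero _ _))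
    obtain ⟨M, hBM, ε, hε⟩ :=
      ((Filter.eventually_ge_atTop B).and (eventually_qHyp_eq hr ht n)).exists
    set z : ℤ := _ - _ with hz
    have hzK : 0 ≤ ((K * n : ℕ) : ℤ) + z := by
      have h1 : ∑ j, ∑ k ∈ Finset.range n, min ((tt j).1 + (tt j).2 * (k : ℤ)) 0 ≤ 0 :=
        Finset.sum_nonpos fun j _ => Finset.sum_nonpos fun k _ => min_le_right _ _
      have h2 : ∑ i, ∑ k ∈ Finset.range n, (-((rr i).1.natAbs : ℤ)) ≤
          ∑ i, ∑ k ∈ Finset.range n, min ((rr i).1 + (rr i).2 * (k : ℤ)) 0 := by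
        refine Finset.sum_le_sum fun i _ => Finset.sum_le_sum fun k _ => ?_
        have : 0 ≤ (rr i).2 * (k : ℤ) := mul_nonneg (hs i).le (by positivity)
        omega
      have h3 : ∑ i, ∑ k ∈ Finset.range n, (-((rr i).1.natAbs : ℤ)) = -((K * n : ℕ) : ℤ) := by
        rw [hK]
        push_cast
        simp only [Finset.sum_const, Finset.card_range, nsmul_eq_mul, Finset.sum_mul,
          ← Finset.sum_neg_distrib]
        exact Finset.sum_congr rfl fun i _ => by ring
      rw [hz]
      linarith
    rw [isIntPoly_iff_mem_range, ← polyZHom_apply, hε]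
    have hext : ∏ b ∈ Finset.Icc 1 B, polyZHom (cyclotomic b ℤ) ^ (w * n) =
        ∏ b ∈ Finset.Icc 1 M,
          polyZHom (cyclotomic b ℤ) ^ (if b ≤ B then ((w * n : ℕ) : ℤ) else 0) := by
      rw [← Finset.prod_subset (Finset.Icc_subset_Icc_right hBM)]
      · refine Finset.prod_congr rfl fun b hb => ?_
        rw [if_pos (Finset.mem_Icc.1 hb).2, zpow_natCast]
      · intro b hb hb'
        rw [Finset.mem_Icc] at hb hb'
        rw [if_neg (by omega), zpow_zero]
    have hEq : polyZHom (X ^ K * ∏ b ∈ Finset.Icc 1 B, cyclotomic b ℤ ^ w) ^ n *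
        (((ε : ℤ) : RatFunc ℚ) * RatFunc.X ^ z * ∏ b ∈ Finset.Icc 1 M, polyZHom (cyclotomic b ℤ) ^
          (∑ i, (divCount (rr i) b n : ℤ) - ∑ j, (divCount (tt j) b n : ℤ))) =
        ((ε : ℤ) : RatFunc ℚ) * RatFunc.X ^ (((K * n : ℕ) : ℤ) + z) *
          ∏ b ∈ Finset.Icc 1 M, polyZHom (cyclotomic b ℤ) ^
            ((if b ≤ B then ((w * n : ℕ) : ℤ) else 0) +
              (∑ i, (divCount (rr i) b n : ℤ) - ∑ j, (divCount (tt j) b n : ℤ))) := by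
      simp only [zpow_add₀ (hcyc _), zpow_add₀ hX, Finset.prod_mul_distrib, ← hext, map_mul,
        map_pow, map_prod, polyZHom_X, mul_pow, ← Finset.prod_pow, ← pow_mul, zpow_natCast]
      ring
    rw [hEq]
    have hzpow : ∀ g : ℤ[X], ∀ m : ℤ, 0 ≤ m → polyZHom g ^ m ∈ polyZHom.range := by
      intro g m hm
      lift m to ℕ using hm
      rw [zpow_natCast, ← map_pow]
      exact ⟨_, rfl⟩
    refine mul_mem (mul_mem (intCast_mem _ _) ?_) (prod_mem fun b _ => hzpow _ _ ?_)
    · rw [← polyZHom_X]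
      exact hzpow _ _ hzK
    · split_ifs with h
      · have h1 : ∑ j, (divCount (tt j) b n : ℤ) ≤ ∑ _j : Fin w, (n : ℤ) :=
          Finset.sum_le_sum fun j _ => by exact_mod_cast divCount_le _ _ _
        have h2 : 0 ≤ ∑ i, (divCount (rr i) b n : ℤ) := Finset.sum_nonneg fun i _ => by positivity
        simp only [Finset.sum_const, Finset.card_univ, Fintype.card_fin, nsmul_eq_mul] at h1
        push_cast
        linarith
      · rw [zero_add]
        exact hB b (by omega) n

lemma aOf_pos (d b : ℕ) : 0 < aOf d b := by
  unfold aOf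
  split_ifs with h
  · exact h.choose_spec.1
  · exact one_pos

/-- Theorem 1.4: efficient criterion for q-integrality when all `s_i > 0`. -/
theorem q_integrality_xi_criterion {v w : ℕ} (rr : Fin v → ℤ × ℤ) (tt : Fin w → ℤ × ℤ)
    (hs : ∀ i, 0 < (rr i).2) (hu : ∀ j, (tt j).2 ≠ 0)
    (ht : ∀ j, ¬ IsNonPosInt (ratOf (tt j))) (hr : ∀ i, ¬ IsNonPosInt (ratOf (rr i))) :
    (∃ C : Polynomial ℤ, C ≠ 0 ∧ ∀ n : ℕ, IsIntPoly (polyZ C ^ n * qHyp rr tt n)) ↔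
      (∀ b : ℕ, 1 ≤ b → b ≤ dRT rr tt →
        ∀ (e : Fin v → ℤ) (f : Fin w → ℤ),
          (∀ i, goodChoice (rr i) b (e i)) → (∀ j, goodChoice (tt j) b (f j)) →
            ∀ x : ℝ, 0 ≤ Xi rr tt b e f x) := by
  have hs' : ∀ i, (rr i).2 ≠ 0 := fun i => (hs i).ne'
  rw [qIntegral_iff_eventually hs (fun i => add_mul_ne_zero_of_not_isNonPosInt (hs' i) (hr i))
    (fun j => add_mul_ne_zero_of_not_isNonPosInt (hu j) (ht j))]
  set d := dRT rr tt with hd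
  have hd0 : 0 < d := by
    refine Nat.pos_of_ne_zero (Nat.lcm_ne_zero ?_ ?_) <;>
      simp [Finset.lcm_eq_zero_iff, hs', hu]
  have hdr : ∀ i, (rr i).2 ∣ d := fun i => by
    rw [Int.dvd_natCast]
    exact (Finset.dvd_lcm (f := fun i => ((rr i).2).natAbs) (Finset.mem_univ i)).trans
      (Nat.dvd_lcm_left _ _)
  have hdt : ∀ j, (tt j).2 ∣ d := fun j => by
    rw [Int.dvd_natCast]
    exact (Finset.dvd_lcm (f := fun j => ((tt j).2).natAbs) (Finset.mem_univ j)).trans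
      (Nat.dvd_lcm_right _ _)
  have key : ∀ b₀ : ℕ, 1 ≤ b₀ → ∀ (e : Fin v → ℤ) (f : Fin w → ℤ),
      (∀ i, goodChoice (rr i) b₀ (e i)) → (∀ j, goodChoice (tt j) b₀ (f j)) →
      ∀ᶠ b : ℕ in Filter.atTop, (d : ℤ) ∣ (b : ℤ) - b₀ →
        ((∀ n, 0 ≤ ∑ i, (divCount (rr i) b n : ℤ) - ∑ j, (divCount (tt j) b n : ℤ)) ↔
          ∀ x : ℝ, 0 ≤ Xi rr tt b₀ e f x) := by
    intro b₀ hb₀ e f he hf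
    have h := eventually_divCount_nonneg_iff (ι := Fin v ⊕ Fin w) (Sum.elim rr tt)
      (Sum.elim (fun _ => 1) fun _ => -1) (Sum.forall.2 ⟨hs', hu⟩) (Sum.forall.2 ⟨hr, ht⟩) hb₀
      (a := aOf d b₀) (by exact_mod_cast aOf_pos d b₀) (e := Sum.elim e f)
      (Sum.forall.2 ⟨he, hf⟩)
    filter_upwards [h] with b hb hdvd
    have := hb (Sum.forall.2 ⟨fun i => (hdr i).trans hdvd, fun j => (hdt j).trans hdvd⟩)
    simpa [Fintype.sum_sum_type, Xi, sub_eq_add_neg, Finset.sum_neg_distrib, hd] using this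
  constructor
  · intro hev b₀ hb₀ _ e f he hf
    obtain ⟨B, hB⟩ := Filter.eventually_atTop.1 (hev.and (key b₀ hb₀ e f he hf))
    have hge : B ≤ b₀ + d * B := (Nat.le_mul_of_pos_left _ hd0).trans (Nat.le_add_left _ _)
    obtain ⟨h1, h2⟩ := hB _ hge
    exact (h2 ⟨B, by push_cast; ring⟩).1 h1
  · intro hXi
    have hall : ∀ b₀ ∈ Finset.Icc 1 d, ∀ᶠ b : ℕ in Filter.atTop, (d : ℤ) ∣ (b : ℤ) - b₀ →
        ∀ n, 0 ≤ ∑ i, (divCount (rr i) b n : ℤ) - ∑ j, (divCount (tt j) b n : ℤ) := by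
      intro b₀ hb₀
      rw [Finset.mem_Icc] at hb₀
      choose e he using fun i => exists_goodChoice (rr i) (hs' i) b₀
      choose f hf using fun j => exists_goodChoice (tt j) (hu j) b₀
      filter_upwards [key b₀ hb₀.1 e f he hf] with b hb hdvd
      exact (hb hdvd).2 (hXi b₀ hb₀.1 hb₀.2 e f he hf)
    rw [← Filter.eventually_all_finset] at hall
    filter_upwards [hall, Filter.eventually_gt_atTop 0] with b hb hb0
    refine hb ((b - 1) % d + 1) ?_ ?_
    · rw [Finset.mem_Icc]
      exact ⟨by omega, Nat.mod_lt _ hd0⟩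
    · refine ⟨((b - 1) / d : ℕ), ?_⟩
      have h := Nat.mod_add_div (b - 1) d
      have h' : b = (b - 1) % d + d * ((b - 1) / d) + 1 := by omega
      have h'' : (b : ℤ) = ((b - 1) % d : ℕ) + d * ((b - 1) / d : ℕ) + 1 := by exact_mod_cast h'
      push_cast at h'' ⊢
      linarith
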